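/- Under hypotheses (H1)–(H5), the θ-periodic solution S^ν of the ν-regularized cell problem satisfies (∫_{θ_α}^{θ_ω} ∫_{𝕋²} |∇S^ν|² dx dθ)^{1/2} ≤ γ/G̃_thr; in particular ‖√(Ã_ε) |∇S^ν|‖_{L²_#(ℝ,L²(𝕋²))} ≤ γ. -/

import Mathlib

open MeasureTheory Filter

noncomputable section

/-- Fundamental domain of the two-dimensional torus `𝕋² = ℝ²/ℤ²`. -/
def Tsq : Set (ℝ × ℝ) := Set.Icc (0:ℝ) 1 ×ˢ Set.Icc (0:ℝ) 1

/-- Periodicity of period 1 in each space direction: a function on `ℝ²`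
defining a function on the torus `𝕋²`. -/
def SpacePeriodic {E : Type*} (f : (ℝ × ℝ) → E) : Prop :=
  ∀ x : ℝ × ℝ, f (x + (1, 0)) = f x ∧ f (x + (0, 1)) = f x

/-- Gradient of a scalar function on `ℝ²`. -/
def grad (f : (ℝ × ℝ) → ℝ) (x : ℝ × ℝ) : ℝ × ℝ :=
  (fderiv ℝ f x (1, 0), fderiv ℝ f x (0, 1))

/-- Divergence of a vector field on `ℝ²`. -/
def div2 (F : (ℝ × ℝ) → ℝ × ℝ) (x : ℝ × ℝ) : ℝ :=
  fderiv ℝ (fun y => (F y).1) x (1, 0) + fderiv ℝ (fun y => (F y).2) x (0, 1)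

/-- Laplacian of a scalar function on `ℝ²`. -/
def lap (f : (ℝ × ℝ) → ℝ) (x : ℝ × ℝ) : ℝ := div2 (grad f) x

/-- `L²(𝕋²)` norm of a scalar function. -/
def L2norm (f : (ℝ × ℝ) → ℝ) : ℝ := (∫ x in Tsq, (f x) ^ 2) ^ (1/2 : ℝ)

/-- `L^∞(𝕋²)` norm of a (bounded) function. -/
def LinfNorm (f : (ℝ × ℝ) → ℝ) : ℝ := ⨆ x : ℝ × ℝ, |f x|

/-- `L²_#(ℝ×𝕋²)` norm : `(∫₀¹ ∫_{𝕋²} f² dx dθ)^{1/2}` for functions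
1-periodic in `θ`. -/
def L2sharpNorm (f : ℝ → (ℝ × ℝ) → ℝ) : ℝ :=
  (∫ θ in Set.Icc (0:ℝ) 1, ∫ x in Tsq, (f θ x) ^ 2) ^ (1/2 : ℝ)

/-- `L^∞_#(ℝ, L²(𝕋²))` norm : `sup_{θ ∈ [0,1]} ‖f(θ,·)‖_{L²(𝕋²)}`. -/
def LinfL2Norm (f : ℝ → (ℝ × ℝ) → ℝ) : ℝ :=
  ⨆ θ : Set.Icc (0:ℝ) 1, L2norm (f θ.1)

/-- The coefficients of the cell problem: a nonnegative regular scalar `Ã_ε(θ,x)`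
and a regular vector field `C̃_ε(θ,x)`, both 1-periodic in `θ` and in space. -/
def CellCoeff (A : ℝ → (ℝ × ℝ) → ℝ) (C : ℝ → (ℝ × ℝ) → ℝ × ℝ) : Prop :=
  ContDiff ℝ (⊤ : ℕ∞) (fun p : ℝ × (ℝ × ℝ) => A p.1 p.2) ∧
  ContDiff ℝ (⊤ : ℕ∞) (fun p : ℝ × (ℝ × ℝ) => C p.1 p.2) ∧
  (∀ θ x, 0 ≤ A θ x) ∧
  (∀ θ x, A (θ + 1) x = A θ x) ∧ (∀ θ x, C (θ + 1) x = C θ x) ∧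
  (∀ θ, SpacePeriodic (A θ)) ∧ (∀ θ, SpacePeriodic (C θ))

/-- `S` is a classical solution, 1-periodic in `θ`, of the regularized cell problem
`μ S + ∂S/∂θ − ∇·((Ã_ε + ν)∇S) = ∇·C̃_ε` on `ℝ × 𝕋²`. -/
def IsRegCellSol (A : ℝ → (ℝ × ℝ) → ℝ) (C : ℝ → (ℝ × ℝ) → ℝ × ℝ)
    (μ ν : ℝ) (S : ℝ → (ℝ × ℝ) → ℝ) : Prop :=
  ContDiff ℝ (⊤ : ℕ∞) (fun p : ℝ × (ℝ × ℝ) => S p.1 p.2) ∧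
  (∀ θ x, S (θ + 1) x = S θ x) ∧
  (∀ θ, SpacePeriodic (S θ)) ∧
  (∀ θ x, μ * S θ x + deriv (fun σ => S σ x) θ
      - div2 (fun y => (A θ y + ν) • grad (S θ) y) x = div2 (C θ) x)

/-- `S` is a classical solution, 1-periodic in `θ` with zero spatial mean for
every `θ`, of the `ν`-regularized cell problem
`∂S/∂θ − ∇·((Ã_ε + ν)∇S) = ∇·C̃_ε` on `ℝ × 𝕋²`. -/
def IsNuCellSol (A : ℝ → (ℝ × ℝ) → ℝ) (C : ℝ → (ℝ × ℝ) → ℝ × ℝ)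
    (ν : ℝ) (S : ℝ → (ℝ × ℝ) → ℝ) : Prop :=
  ContDiff ℝ (⊤ : ℕ∞) (fun p : ℝ × (ℝ × ℝ) => S p.1 p.2) ∧
  (∀ θ x, S (θ + 1) x = S θ x) ∧
  (∀ θ, SpacePeriodic (S θ)) ∧
  (∀ θ x, deriv (fun σ => S σ x) θ
      - div2 (fun y => (A θ y + ν) • grad (S θ) y) x = div2 (C θ) x) ∧
  (∀ θ : ℝ, ∫ x in Tsq, S θ x = 0)

/-- (H1) All of `|Ã_ε|, |C̃_ε|, |∂Ã_ε/∂θ|, |∂C̃_ε/∂θ|, |∇Ã_ε|, |∇·C̃_ε|` are bounded by `γ`. -/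
def CellH1 (γ : ℝ) (A : ℝ → (ℝ × ℝ) → ℝ) (C : ℝ → (ℝ × ℝ) → ℝ × ℝ) : Prop :=
  ∀ θ x, |A θ x| ≤ γ ∧ ‖C θ x‖ ≤ γ ∧
    |deriv (fun σ => A σ x) θ| ≤ γ ∧ ‖deriv (fun σ => C σ x) θ‖ ≤ γ ∧
    ‖grad (A θ) x‖ ≤ γ ∧ |div2 (C θ) x| ≤ γ

/-- (H3) `Ã_ε ≥ G̃_thr > 0` for `θ ∈ [θ_α, θ_ω] ⊆ [0,1]`. -/
def CellH3 (Gthr θa θw : ℝ) (A : ℝ → (ℝ × ℝ) → ℝ) : Prop :=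
  0 < Gthr ∧ θa < θw ∧ θa ∈ Set.Icc (0:ℝ) 1 ∧ θw ∈ Set.Icc (0:ℝ) 1 ∧
  ∀ x : ℝ × ℝ, ∀ θ ∈ Set.Icc θa θw, Gthr ≤ A θ x

/-- (H4) Wherever `Ã_ε ≤ G̃_thr`, the derivatives `∇Ã_ε` and `∇·C̃_ε` vanish. -/
def CellH4 (Gthr : ℝ) (A : ℝ → (ℝ × ℝ) → ℝ) (C : ℝ → (ℝ × ℝ) → ℝ × ℝ) : Prop :=
  ∀ θ x, A θ x ≤ Gthr → grad (A θ) x = 0 ∧ div2 (C θ) x = 0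

/-- (H5) Pointwise `|C̃_ε| ≤ γ Ã_ε`, `|C̃_ε|² ≤ γ Ã_ε`, `|∇Ã_ε| ≤ γ Ã_ε`,
`|∇·C̃_ε| ≤ γ Ã_ε`. -/
def CellH5 (γ : ℝ) (A : ℝ → (ℝ × ℝ) → ℝ) (C : ℝ → (ℝ × ℝ) → ℝ × ℝ) : Prop :=
  ∀ θ x, ‖C θ x‖ ≤ γ * A θ x ∧ ‖C θ x‖ ^ 2 ≤ γ * A θ x ∧
    ‖grad (A θ) x‖ ≤ γ * A θ x ∧ |div2 (C θ) x| ≤ γ * A θ x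

/-! ### Helper lemmas -/

lemma Tsq_compact : IsCompact Tsq := isCompact_Icc.prod isCompact_Icc

lemma Tsq_eq : Tsq = Set.Icc ((0:ℝ), (0:ℝ)) (1, 1) := by
  rw [Tsq, Set.Icc_prod_Icc]

lemma intOn_Tsq {f : ℝ × ℝ → ℝ} (hf : Continuous f) : IntegrableOn f Tsq :=
  hf.continuousOn.integrableOn_compact Tsq_compact

lemma vol_Tsq : volume.real Tsq = 1 := by
  rw [Tsq, Measure.volume_eq_prod, measureReal_prod_prod]; simp

lemma int_const_Tsq (c : ℝ) : ∫ _x in Tsq, c = c := by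
  rw [setIntegral_const, vol_Tsq, one_smul]

lemma int_mono_Tsq {f g : ℝ × ℝ → ℝ} (hf : Continuous f) (hg : Continuous g)
    (h : ∀ x, f x ≤ g x) : ∫ x in Tsq, f x ≤ ∫ x in Tsq, g x :=
  integral_mono (intOn_Tsq hf) (intOn_Tsq hg) h

lemma int_Tsq_iter {f : ℝ × ℝ → ℝ} (hf : Continuous f) :
    ∫ x in Tsq, f x = ∫ x in (0:ℝ)..1, ∫ y in (0:ℝ)..1, f (x, y) := by
  have h := intOn_Tsq hf
  unfold Tsq at *
  rw [Measure.volume_eq_prod] at *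
  rw [setIntegral_prod _ h, intervalIntegral.integral_of_le zero_le_one,
    integral_Icc_eq_integral_Ioc]
  refine integral_congr_ae (Eventually.of_forall fun x => ?_)
  simp only
  rw [intervalIntegral.integral_of_le zero_le_one, integral_Icc_eq_integral_Ioc]

lemma int_Tsq_iter' {f : ℝ × ℝ → ℝ} (hf : Continuous f) :
    ∫ x in Tsq, f x = ∫ y in (0:ℝ)..1, ∫ x in (0:ℝ)..1, f (x, y) := by
  rw [int_Tsq_iter hf]
  refine intervalIntegral_intervalIntegral_swap ?_
  rw [Set.uIoc_of_le zero_le_one]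
  exact (intOn_Tsq hf).mono_set (Set.prod_mono Set.Ioc_subset_Icc_self Set.Ioc_subset_Icc_self)

lemma grad_fst_cont {f : ℝ × ℝ → ℝ} (hf : ContDiff ℝ 1 f) :
    Continuous (fun x => fderiv ℝ f x (1, 0)) :=
  (hf.continuous_fderiv one_ne_zero).clm_apply continuous_const

lemma grad_snd_cont {f : ℝ × ℝ → ℝ} (hf : ContDiff ℝ 1 f) :
    Continuous (fun x => fderiv ℝ f x (0, 1)) :=
  (hf.continuous_fderiv one_ne_zero).clm_apply continuous_const

lemma int_div_zero {F : ℝ × ℝ → ℝ × ℝ} (hF : ContDiff ℝ 1 F) (hp : SpacePeriodic F) :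
    ∫ x in Tsq, div2 F x = 0 := by
  have h1 : ContDiff ℝ 1 (fun y => (F y).1) := hF.fst
  have h2 : ContDiff ℝ 1 (fun y => (F y).2) := hF.snd
  have key := integral_divergence_prod_Icc_of_hasFDerivAt_of_le
    (fun y => (F y).1) (fun y => (F y).2) (fun x => fderiv ℝ (fun y => (F y).1) x)
    (fun x => fderiv ℝ (fun y => (F y).2) x) (0, 0) (1, 1) (by simp)
    h1.continuous.continuousOn h2.continuous.continuousOn
    (fun x _ => (h1.differentiable one_ne_zero x).hasFDerivAt)
    (fun x _ => (h2.differentiable one_ne_zero x).hasFDerivAt)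
    (((grad_fst_cont h1).add (grad_snd_cont h2)).integrableOn_Icc)
  rw [Tsq_eq]
  unfold div2
  rw [key]
  have e1 : ∀ x : ℝ, F (x, 1) = F (x, 0) := fun x => by
    have := (hp (x, 0)).2; simpa using this
  have e2 : ∀ x : ℝ, F (1, x) = F (0, x) := fun x => by
    have := (hp (0, x)).1; simpa using this
  simp [e1, e2]

lemma ibp {f : ℝ × ℝ → ℝ} {F : ℝ × ℝ → ℝ × ℝ} (hf : ContDiff ℝ 1 f) (hF : ContDiff ℝ 1 F)
    (hfp : SpacePeriodic f) (hFp : SpacePeriodic F) :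
    ∫ x in Tsq, f x * div2 F x =
      - ∫ x in Tsq, ((grad f x).1 * (F x).1 + (grad f x).2 * (F x).2) := by
  have h1 : ContDiff ℝ 1 (fun y => (F y).1) := hF.fst
  have h2 : ContDiff ℝ 1 (fun y => (F y).2) := hF.snd
  have h0 := int_div_zero (F := fun x => f x • F x) (hf.smul hF)
    (fun x => ⟨by simp [(hfp x).1, (hFp x).1], by simp [(hfp x).2, (hFp x).2]⟩)
  have e : ∀ x, div2 (fun x => f x • F x) x = f x * div2 F x +
      ((grad f x).1 * (F x).1 + (grad f x).2 * (F x).2) := by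
    intro x
    have a1 := fderiv_fun_mul (hf.differentiable one_ne_zero x) (h1.differentiable one_ne_zero x)
    have a2 := fderiv_fun_mul (hf.differentiable one_ne_zero x) (h2.differentiable one_ne_zero x)
    simp only [div2, grad, Prod.smul_fst, Prod.smul_snd, smul_eq_mul]
    rw [a1, a2]
    simp
    ring
  simp_rw [e] at h0
  have c1 := hf.continuous
  have c2 := h1.continuous
  have c3 := h2.continuous
  have c4 := grad_fst_cont hf
  have c5 := grad_snd_cont hf
  have c6 := grad_fst_cont h1
  have c7 := grad_snd_cont h2
  rw [integral_add] at h0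
  · linarith
  · exact intOn_Tsq (by unfold div2; fun_prop)
  · exact intOn_Tsq (by unfold grad; fun_prop)

/-- Pointwise one-dimensional Poincare inequality for periodic functions. -/
lemma poinc1 {f f' : ℝ → ℝ} (hd : ∀ x, HasDerivAt f (f' x) x) (hc : Continuous f')
    (hp : Function.Periodic f 1) (x : ℝ) :
    12 * (f x - ∫ t in (0:ℝ)..1, f t) ^ 2 ≤ ∫ t in (0:ℝ)..1, f' t ^ 2 := by
  have hfc : Continuous f := continuous_iff_continuousAt.2 fun x => (hd x).continuousAt
  have hp' : Function.Periodic f' 1 := by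
    intro y
    have h1 : HasDerivAt f (f' (y + 1)) y := by
      have := (hd (y + 1)).comp_add_const y 1
      have e : (fun x => f (x + 1)) = f := funext hp
      rwa [e] at this
    exact h1.unique (hd y)
  set J := f x - ∫ t in (0:ℝ)..1, f t with hJ
  have hm : ∫ t in (0:ℝ)..1, f (x + t) = ∫ t in (0:ℝ)..1, f t := by
    rw [intervalIntegral.integral_comp_add_left]
    have := hp.intervalIntegral_add_eq x 0
    simpa using this
  have hm' : ∫ t in (0:ℝ)..1, f' (x + t) ^ 2 = ∫ t in (0:ℝ)..1, f' t ^ 2 := by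
    rw [intervalIntegral.integral_comp_add_left (fun t => f' t ^ 2)]
    have hq : Function.Periodic (fun t => f' t ^ 2) 1 := fun y => by simp [hp' y]
    have := hq.intervalIntegral_add_eq x 0
    simpa using this
  have hI : ∫ t in (0:ℝ)..1, (t - 1/2) * f' (x + t) = J := by
    have := intervalIntegral.integral_mul_deriv_eq_deriv_mul (a := 0) (b := 1)
      (u := fun t : ℝ => t - 1/2) (u' := fun _ => 1) (v := fun t => f (x + t))
      (v' := fun t => f' (x + t)) (fun t _ => (hasDerivAt_id t).sub_const _)
      (fun t _ => (hd (x + t)).comp_const_add x t)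
      (by simp) ((hc.comp (by fun_prop)).intervalIntegrable _ _)
    rw [this, hJ]
    simp only [one_mul, hm, hp x, add_zero]
    ring
  have hsq : ∫ t in (0:ℝ)..1, (t - 1/2) ^ 2 = 1/12 := by
    rw [intervalIntegral.integral_comp_sub_right (fun t => t ^ 2)]
    norm_num [integral_pow]
  have hnn : 0 ≤ ∫ t in (0:ℝ)..1, ((12 * J) * (t - 1/2) - f' (x + t)) ^ 2 :=
    intervalIntegral.integral_nonneg zero_le_one fun t _ => sq_nonneg _
  have hex : ∫ t in (0:ℝ)..1, ((12 * J) * (t - 1/2) - f' (x + t)) ^ 2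
      = 144 * J ^ 2 * (1/12) - 24 * J * J + ∫ t in (0:ℝ)..1, f' t ^ 2 := by
    have e24 : 24 * J * J = 24 * J * ∫ t in (0:ℝ)..1, (t - 1/2) * f' (x + t) := by rw [hI]
    rw [← hm', ← hsq, e24]
    rw [← intervalIntegral.integral_const_mul, ← intervalIntegral.integral_const_mul,
      ← intervalIntegral.integral_sub, ← intervalIntegral.integral_add]
    · refine intervalIntegral.integral_congr fun t _ => ?_
      ring
    all_goals exact Continuous.intervalIntegrable (by fun_prop) _ _
  nlinarith

/-- Jensen on the unit interval. -/
lemma jens {f : ℝ → ℝ} (hc : Continuous f) :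
    (∫ t in (0:ℝ)..1, f t) ^ 2 ≤ ∫ t in (0:ℝ)..1, f t ^ 2 := by
  set J := ∫ t in (0:ℝ)..1, f t with hJ
  have hnn : 0 ≤ ∫ t in (0:ℝ)..1, (f t - J) ^ 2 :=
    intervalIntegral.integral_nonneg zero_le_one fun t _ => sq_nonneg _
  have : ∫ t in (0:ℝ)..1, (f t - J) ^ 2 = (∫ t in (0:ℝ)..1, f t ^ 2) - 2 * J * J + J ^ 2 := by
    have e : ∀ t, (f t - J) ^ 2 = f t ^ 2 - 2 * J * f t + J ^ 2 := fun t => by ring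
    simp_rw [e]
    rw [intervalIntegral.integral_add, intervalIntegral.integral_sub,
      intervalIntegral.integral_const_mul, intervalIntegral.integral_const]
    · simp [hJ]
    all_goals exact Continuous.intervalIntegrable (by fun_prop) _ _
  nlinarith

lemma poinc2 {f : ℝ × ℝ → ℝ} (hf : ContDiff ℝ 1 f) (hp : SpacePeriodic f)
    (h0 : ∫ x in Tsq, f x = 0) :
    12 * ∫ x in Tsq, f x ^ 2 ≤ ∫ x in Tsq, ((grad f x).1 ^ 2 + (grad f x).2 ^ 2) := by
  have cf := hf.continuous
  have cp := grad_fst_cont hf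
  have cq := grad_snd_cont hf
  set p : ℝ × ℝ → ℝ := fun x => fderiv ℝ f x (1, 0) with hpdef
  set q : ℝ × ℝ → ℝ := fun x => fderiv ℝ f x (0, 1) with hqdef
  change _ ≤ ∫ x in Tsq, (p x ^ 2 + q x ^ 2)
  have hdx : ∀ x y, HasDerivAt (fun s => f (s, y)) (p (x, y)) x := fun x y => by
    have := ((hf.differentiable one_ne_zero (x, y)).hasFDerivAt).comp_hasDerivAt x
      ((hasDerivAt_id x).prodMk (hasDerivAt_const x y))
    exact this
  have hdy : ∀ x y, HasDerivAt (fun s => f (x, s)) (q (x, y)) y := fun x y => by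
    have := ((hf.differentiable one_ne_zero (x, y)).hasFDerivAt).comp_hasDerivAt y
      ((hasDerivAt_const y x).prodMk (hasDerivAt_id y))
    exact this
  have h1 : ∀ x y, 12 * (f (x, y) - ∫ s in (0:ℝ)..1, f (s, y)) ^ 2
      ≤ ∫ s in (0:ℝ)..1, p (s, y) ^ 2 := fun x y =>
    poinc1 (f := fun s => f (s, y)) (f' := fun s => p (s, y)) (fun x => hdx x y)
      (by fun_prop) (fun s => by have := (hp (s, y)).1; simpa using this) x
  have h2 : ∀ x y, 12 * (f (x, y) - ∫ s in (0:ℝ)..1, f (x, s)) ^ 2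
      ≤ ∫ s in (0:ℝ)..1, q (x, s) ^ 2 := fun x y =>
    poinc1 (f := fun s => f (x, s)) (f' := fun s => q (x, s)) (fun y => hdy x y)
      (by fun_prop) (fun s => by have := (hp (x, s)).2; simpa using this) y
  set m : ℝ → ℝ := fun y => ∫ s in (0:ℝ)..1, f (s, y) with hm
  set n : ℝ → ℝ := fun x => ∫ s in (0:ℝ)..1, f (x, s) with hn
  have cm : Continuous m := by
    rw [hm]; fun_prop
  have cn : Continuous n := by
    rw [hn]; fun_prop
  have hn0 : ∫ x in (0:ℝ)..1, n x = 0 := by rw [int_Tsq_iter cf] at h0; exact h0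
  have hQ : ∀ y, 12 * m y ^ 2 ≤ ∫ x in Tsq, q x ^ 2 := fun y => by
    have e1 : m y = ∫ x in (0:ℝ)..1, (f (x, y) - n x) := by
      rw [intervalIntegral.integral_sub, hn0, sub_zero]
      all_goals exact Continuous.intervalIntegrable (by fun_prop) _ _
    have e2 := jens (f := fun x => f (x, y) - n x) (by fun_prop)
    rw [← e1] at e2
    rw [int_Tsq_iter (by fun_prop)]
    calc 12 * m y ^ 2 ≤ 12 * ∫ x in (0:ℝ)..1, (f (x, y) - n x) ^ 2 := by linarith
      _ = ∫ x in (0:ℝ)..1, 12 * (f (x, y) - n x) ^ 2 := by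
        rw [intervalIntegral.integral_const_mul]
      _ ≤ _ := by
        refine intervalIntegral.integral_mono zero_le_one ?_ ?_ fun x => h2 x y
        all_goals exact Continuous.intervalIntegrable (by fun_prop) _ _
  have hP : ∀ y, 12 * ∫ x in (0:ℝ)..1, f (x, y) ^ 2 ≤
      (∫ x in (0:ℝ)..1, p (x, y) ^ 2) + ∫ x in Tsq, q x ^ 2 := fun y => by
    have e : ∫ x in (0:ℝ)..1, f (x, y) ^ 2
        = (∫ x in (0:ℝ)..1, (f (x, y) - m y) ^ 2) + 2 * m y * m y - m y ^ 2 := by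
      have e0 : ∀ x, f (x, y) ^ 2 = (f (x, y) - m y) ^ 2 + 2 * m y * f (x, y) - m y ^ 2 :=
        fun x => by ring
      simp_rw [e0]
      rw [intervalIntegral.integral_sub, intervalIntegral.integral_add,
        intervalIntegral.integral_const_mul, intervalIntegral.integral_const]
      · simp [hm]
      all_goals exact Continuous.intervalIntegrable (by fun_prop) _ _
    have e3 : ∫ x in (0:ℝ)..1, 12 * (f (x, y) - m y) ^ 2 ≤
        ∫ _x in (0:ℝ)..1, ∫ s in (0:ℝ)..1, p (s, y) ^ 2 := by
      refine intervalIntegral.integral_mono zero_le_one ?_ ?_ fun x => h1 x y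
      all_goals exact Continuous.intervalIntegrable (by fun_prop) _ _
    rw [intervalIntegral.integral_const_mul, intervalIntegral.integral_const] at e3
    simp only [sub_zero, one_smul] at e3
    have := hQ y
    nlinarith
  rw [integral_add (intOn_Tsq (by fun_prop)) (intOn_Tsq (by fun_prop)),
    int_Tsq_iter' (f := fun x => f x ^ 2) (by fun_prop),
    int_Tsq_iter' (f := fun x => p x ^ 2) (by fun_prop), ← intervalIntegral.integral_const_mul]
  calc _ ≤ ∫ y in (0:ℝ)..1, ((∫ x in (0:ℝ)..1, p (x, y) ^ 2) + ∫ x in Tsq, q x ^ 2) := by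
        refine intervalIntegral.integral_mono zero_le_one ?_ ?_ fun y => hP y
        all_goals exact Continuous.intervalIntegrable (by fun_prop) _ _
    _ = _ := by
      rw [intervalIntegral.integral_add, intervalIntegral.integral_const]
      · simp
      all_goals exact Continuous.intervalIntegrable (by fun_prop) _ _

lemma harnack1 {g g' : ℝ → ℝ} {γ : ℝ} (hγ : 0 ≤ γ) (hd : ∀ x, HasDerivAt g (g' x) x)
    (hb : ∀ x, |g' x| ≤ γ * g x) (h0 : ∀ x, 0 ≤ g x) (hp : Function.Periodic g 1) (s t : ℝ) :
    g s ≤ Real.exp (γ / 2) * g t := by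
  have hE : ∀ (c x : ℝ), HasDerivAt (fun x => Real.exp (c * x)) (Real.exp (c * x) * c) x :=
    fun c x => by simpa using ((hasDerivAt_id x).const_mul c).exp
  have hmono : Monotone (fun x => Real.exp (γ * x) * g x) := by
    refine monotone_of_hasDerivAt_nonneg (fun x => (hE γ x).mul (hd x)) fun x => ?_
    have := (abs_le.1 (hb x)).1
    have e := Real.exp_pos (γ * x)
    simp only [Pi.zero_apply]
    nlinarith
  have hanti : Antitone (fun x => Real.exp (-γ * x) * g x) := by
    refine antitone_of_hasDerivAt_nonpos (fun x => (hE (-γ) x).mul (hd x)) fun x => ?_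
    have := (abs_le.1 (hb x)).2
    have e := Real.exp_pos (-γ * x)
    simp only [Pi.zero_apply]
    nlinarith
  have key : ∀ u v : ℝ, |u - v| ≤ 1 / 2 → g u ≤ Real.exp (γ / 2) * g v := by
    intro u v huv
    rw [abs_le] at huv
    rcases le_total u v with h | h
    · have h1 := hmono h
      simp only at h1
      have h2 : g u ≤ Real.exp (γ * (v - u)) * g v := by
        have e1 : Real.exp (γ * v) = Real.exp (γ * u) * Real.exp (γ * (v - u)) := by
          rw [← Real.exp_add]; ring_nf
        rw [e1, mul_assoc] at h1
        exact le_of_mul_le_mul_left h1 (Real.exp_pos _)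
      refine h2.trans (mul_le_mul_of_nonneg_right (Real.exp_le_exp.2 ?_) (h0 v))
      nlinarith
    · have h1 := hanti h
      simp only at h1
      have h2 : g u ≤ Real.exp (γ * (u - v)) * g v := by
        have e1 : Real.exp (-γ * v) = Real.exp (-γ * u) * Real.exp (γ * (u - v)) := by
          rw [← Real.exp_add]; ring_nf
        rw [e1, mul_assoc] at h1
        exact le_of_mul_le_mul_left h1 (Real.exp_pos _)
      refine h2.trans (mul_le_mul_of_nonneg_right (Real.exp_le_exp.2 ?_) (h0 v))
      nlinarith
  have h := key s (t + (round (s - t) : ℤ)) (by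
    have := abs_sub_round (s - t)
    rwa [← sub_sub])
  have hper : g (t + (round (s - t) : ℤ)) = g t := by
    have := hp.int_mul (round (s - t)) t
    simpa using this
  rwa [hper] at h

lemma harnack2 {a : ℝ × ℝ → ℝ} {γ : ℝ} (hγ : 0 ≤ γ) (ha : ContDiff ℝ 1 a)
    (h0 : ∀ x, 0 ≤ a x) (hp : SpacePeriodic a) (hb : ∀ x, ‖grad a x‖ ≤ γ * a x)
    (x y : ℝ × ℝ) : a x ≤ Real.exp γ * a y := by
  have h1 : a (x.1, x.2) ≤ Real.exp (γ / 2) * a (y.1, x.2) :=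
    harnack1 (g := fun s => a (s, x.2)) (g' := fun s => fderiv ℝ a (s, x.2) (1, 0)) hγ
      (fun s => ((ha.differentiable one_ne_zero (s, x.2)).hasFDerivAt).comp_hasDerivAt s
        ((hasDerivAt_id s).prodMk (hasDerivAt_const s x.2)))
      (fun s => (norm_fst_le (grad a (s, x.2))).trans (hb _)) (fun s => h0 _)
      (fun s => by have := (hp (s, x.2)).1; simpa using this) x.1 y.1
  have h2 : a (y.1, x.2) ≤ Real.exp (γ / 2) * a (y.1, y.2) :=
    harnack1 (g := fun s => a (y.1, s)) (g' := fun s => fderiv ℝ a (y.1, s) (0, 1)) hγ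
      (fun s => ((ha.differentiable one_ne_zero (y.1, s)).hasFDerivAt).comp_hasDerivAt s
        ((hasDerivAt_const s y.1).prodMk (hasDerivAt_id s)))
      (fun s => (norm_snd_le (grad a (y.1, s))).trans (hb _)) (fun s => h0 _)
      (fun s => by have := (hp (y.1, s)).2; simpa using this) x.2 y.2
  have e : Real.exp γ = Real.exp (γ / 2) * Real.exp (γ / 2) := by
    rw [← Real.exp_add]; ring_nf
  calc a x ≤ Real.exp (γ / 2) * a (y.1, x.2) := h1
    _ ≤ Real.exp (γ / 2) * (Real.exp (γ / 2) * a y) :=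
      mul_le_mul_of_nonneg_left h2 (Real.exp_pos _).le
    _ = _ := by rw [e]; ring

lemma dichotomy {a : ℝ × ℝ → ℝ} {G : ℝ} (ha : ContDiff ℝ 1 a)
    (h : ∀ x, a x ≤ G → grad a x = 0) : (∀ x, G ≤ a x) ∨ (∀ x, a x ≤ G) := by
  by_contra hcon
  push Not at hcon
  obtain ⟨⟨x0, hx0⟩, ⟨x1, hx1⟩⟩ := hcon
  have hfd : ∀ x, a x ≤ G → fderiv ℝ a x = 0 := by
    intro x hx
    have := h x hx
    simp only [grad, Prod.mk_eq_zero] at this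
    ext
    · simpa using this.1
    · simpa using this.2
  have hcl : IsClopen {x | a x = a x0} := by
    refine ⟨isClosed_eq ha.continuous continuous_const, ?_⟩
    rw [Metric.isOpen_iff]
    intro x hx
    have hx' : a x < G := by rw [Set.mem_ofPred_eq] at hx; linarith
    obtain ⟨r, hr, hball⟩ := Metric.isOpen_iff.1
      (isOpen_lt ha.continuous (continuous_const (y := G))) x hx'
    refine ⟨r, hr, fun y hy => ?_⟩
    have := Metric.isOpen_ball.is_const_of_fderiv_eq_zero (𝕜 := ℝ)
      (convex_ball x r).isPreconnected (ha.differentiable one_ne_zero).differentiableOn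
      (fun z hz => hfd z (le_of_lt (hball hz))) hy (Metric.mem_ball_self hr)
    rw [Set.mem_ofPred_eq, this]; exact hx
  have huniv := hcl.eq_univ ⟨x0, rfl⟩
  have : x1 ∈ {x | a x = a x0} := by rw [huniv]; trivial
  rw [Set.mem_ofPred_eq] at this
  linarith

/-! Estimates at fixed time. -/

lemma div2_cont {F : ℝ × ℝ → ℝ × ℝ} (hF : ContDiff ℝ 1 F) : Continuous (div2 F) :=
  (grad_fst_cont hF.fst).add (grad_snd_cont hF.snd)

lemma grad1_cont {f : ℝ × ℝ → ℝ} (hf : ContDiff ℝ 1 f) : Continuous (fun x => (grad f x).1) :=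
  grad_fst_cont hf

lemma grad2_cont {f : ℝ × ℝ → ℝ} (hf : ContDiff ℝ 1 f) : Continuous (fun x => (grad f x).2) :=
  grad_snd_cont hf

section fixed
variable {f a : ℝ × ℝ → ℝ} {c : ℝ × ℝ → ℝ × ℝ} {γ G : ℝ}

lemma source_bound_G (hf : ContDiff ℝ 1 f) (hfp : SpacePeriodic f) (hf0 : ∫ x in Tsq, f x = 0)
    (ha : ContDiff ℝ 1 a) (hc : ContDiff ℝ 1 c) (hG : 0 < G)
    (h0 : ∀ x, 0 ≤ a x)
    (h4 : ∀ x, a x ≤ G → grad a x = 0 ∧ div2 c x = 0) (h1 : ∀ x, |div2 c x| ≤ γ) :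
    ∫ x in Tsq, f x * div2 c x ≤ γ ^ 2 / G / 2 +
      (∫ x in Tsq, a x * ((grad f x).1 ^ 2 + (grad f x).2 ^ 2)) / 2 := by
  have cf := hf.continuous
  have ca := ha.continuous
  have cd := div2_cont hc
  have c1 := grad1_cont hf
  have c2 := grad2_cont hf
  rcases dichotomy ha (fun x hx => (h4 x hx).1) with h | h
  · have e1 : ∫ x in Tsq, f x * div2 c x ≤ ∫ x in Tsq, (γ ^ 2 / G / 2 + G / 2 * f x ^ 2) := by
      refine int_mono_Tsq (by fun_prop) (by fun_prop) fun x => ?_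
      have hh : (div2 c x) ^ 2 ≤ γ ^ 2 := sq_le_sq' (abs_le.1 (h1 x)).1 (abs_le.1 (h1 x)).2
      have : f x * div2 c x ≤ (div2 c x) ^ 2 / G / 2 + G / 2 * f x ^ 2 := by
        have e : (div2 c x) ^ 2 / G / 2 + G / 2 * f x ^ 2 - f x * div2 c x
          = (div2 c x - G * f x) ^ 2 / (2 * G) := by field_simp; ring
        have : 0 ≤ (div2 c x - G * f x) ^ 2 / (2 * G) := by positivity
        linarith
      have : (div2 c x) ^ 2 / G ≤ γ ^ 2 / G := by gcongr
      linarith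
    rw [integral_add (intOn_Tsq (by fun_prop)) (intOn_Tsq (by fun_prop)), int_const_Tsq,
      integral_const_mul] at e1
    have e2 := poinc2 hf hfp hf0
    have e3 : ∫ x in Tsq, G * ((grad f x).1 ^ 2 + (grad f x).2 ^ 2) ≤
        ∫ x in Tsq, a x * ((grad f x).1 ^ 2 + (grad f x).2 ^ 2) :=
      int_mono_Tsq (by fun_prop) (by fun_prop) fun x =>
        mul_le_mul_of_nonneg_right (h x) (by positivity)
    rw [integral_const_mul] at e3
    have e4 : 0 ≤ ∫ x in Tsq, f x ^ 2 := integral_nonneg fun x => sq_nonneg _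
    have e5 := mul_le_mul_of_nonneg_left e2 hG.le
    nlinarith
  · have : ∀ x, f x * div2 c x = 0 := fun x => by rw [(h4 x (h x)).2, mul_zero]
    simp_rw [this]
    rw [integral_zero]
    have : 0 ≤ ∫ x in Tsq, a x * ((grad f x).1 ^ 2 + (grad f x).2 ^ 2) :=
      integral_nonneg fun x => mul_nonneg (h0 x) (by positivity)
    positivity

lemma source_bound_large (hf : ContDiff ℝ 1 f) (hfp : SpacePeriodic f)
    (ha : ContDiff ℝ 1 a) (hc : ContDiff ℝ 1 c) (hcp : SpacePeriodic c) (hγ : 2 ≤ γ)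
    (h5 : ∀ x, ‖c x‖ ^ 2 ≤ γ * a x) :
    ∫ x in Tsq, f x * div2 c x ≤ γ ^ 2 / 2 +
      (∫ x in Tsq, a x * ((grad f x).1 ^ 2 + (grad f x).2 ^ 2)) / 2 := by
  have ca := ha.continuous
  have cc := hc.continuous
  have c1 := grad1_cont hf
  have c2 := grad2_cont hf
  rw [ibp hf hc hfp hcp, ← integral_neg]
  have e1 : ∫ x in Tsq, -((grad f x).1 * (c x).1 + (grad f x).2 * (c x).2) ≤
      ∫ x in Tsq, (γ + (1 / 2) * (a x * ((grad f x).1 ^ 2 + (grad f x).2 ^ 2))) := by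
    refine int_mono_Tsq (by fun_prop) (by fun_prop) fun x => ?_
    have key : ∀ u v : ℝ, v ^ 2 ≤ γ * a x → - (u * v) ≤ γ / 2 + a x * u ^ 2 / 2 := by
      intro u v hv
      have h3 : γ * (γ + a x * u ^ 2 + 2 * (u * v)) ≥ 0 := by
        nlinarith [sq_nonneg (γ + u * v), mul_le_mul_of_nonneg_right hv (sq_nonneg u)]
      have := nonneg_of_mul_nonneg_right h3 (by linarith)
      linarith
    have q1 : (c x).1 ^ 2 ≤ γ * a x := by
      refine le_trans ?_ (h5 x)
      rw [← sq_abs]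
      exact pow_le_pow_left₀ (abs_nonneg _) (norm_fst_le (c x)) 2
    have q2 : (c x).2 ^ 2 ≤ γ * a x := by
      refine le_trans ?_ (h5 x)
      rw [← sq_abs]
      exact pow_le_pow_left₀ (abs_nonneg _) (norm_snd_le (c x)) 2
    have := key (grad f x).1 _ q1
    have := key (grad f x).2 _ q2
    linarith
  rw [integral_add (intOn_Tsq (by fun_prop)) (intOn_Tsq (by fun_prop)), int_const_Tsq,
    integral_const_mul] at e1
  nlinarith

lemma source_bound_small (hf : ContDiff ℝ 1 f) (hfp : SpacePeriodic f)
    (hf0 : ∫ x in Tsq, f x = 0)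
    (ha : ContDiff ℝ 1 a) (hap : SpacePeriodic a) (h0 : ∀ x, 0 ≤ a x)
    (hc : ContDiff ℝ 1 c) (hγ0 : 0 ≤ γ) (hγ : γ ≤ 2)
    (h1 : ∀ x, |div2 c x| ≤ γ) (h5 : ∀ x, |div2 c x| ≤ γ * a x)
    (h5' : ∀ x, ‖grad a x‖ ≤ γ * a x) :
    ∫ x in Tsq, f x * div2 c x ≤ γ ^ 2 / 2 +
      (∫ x in Tsq, a x * ((grad f x).1 ^ 2 + (grad f x).2 ^ 2)) / 2 := by
  have cf := hf.continuous
  have ca := ha.continuous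
  have cd := div2_cont hc
  have c1 := grad1_cont hf
  have c2 := grad2_cont hf
  have hexp : Real.exp γ ≤ 12 := by
    have h2 : Real.exp 2 = Real.exp 1 * Real.exp 1 := by rw [← Real.exp_add]; norm_num
    have h3 := Real.exp_one_lt_d9
    have h4 := Real.exp_pos 1
    have h5 : Real.exp γ ≤ Real.exp 2 := Real.exp_le_exp.2 hγ
    nlinarith
  have hh : ∀ x y, a x ≤ 12 * a y := fun x y =>
    (harnack2 hγ0 ha h0 hap h5' x y).trans (mul_le_mul_of_nonneg_right hexp (h0 y))
  obtain ⟨z, hz, hmax⟩ := Tsq_compact.exists_isMaxOn ⟨(0, 0), by simp [Tsq]⟩ ca.continuousOn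
  have e1 : ∫ x in Tsq, f x * div2 c x ≤ ∫ x in Tsq, (γ ^ 2 / 2 + (1 / 2) * (a x * f x ^ 2)) := by
    refine int_mono_Tsq (by fun_prop) (by fun_prop) fun x => ?_
    have hd : (div2 c x) ^ 2 ≤ γ ^ 2 * a x := by
      rw [← sq_abs]
      have := mul_le_mul (h1 x) (h5 x) (abs_nonneg _) hγ0
      nlinarith
    rcases (h0 x).eq_or_lt with hz | hz
    · rw [← hz] at hd
      have : div2 c x = 0 := by nlinarith [sq_nonneg (div2 c x)]
      rw [this, ← hz]
      have := sq_nonneg γ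
      linarith
    · have h3 : 0 ≤ a x * (γ ^ 2 + a x * f x ^ 2 - 2 * (f x * div2 c x)) := by
        nlinarith [sq_nonneg (a x * f x - div2 c x)]
      have := nonneg_of_mul_nonneg_right h3 hz
      linarith
  rw [integral_add (intOn_Tsq (by fun_prop)) (intOn_Tsq (by fun_prop)), int_const_Tsq,
    integral_const_mul] at e1
  have e2 : ∫ x in Tsq, a x * f x ^ 2 ≤ ∫ x in Tsq, a z * f x ^ 2 :=
    setIntegral_mono_on (intOn_Tsq (by fun_prop)) (intOn_Tsq (by fun_prop))
      Tsq_compact.measurableSet fun x hx => mul_le_mul_of_nonneg_right (hmax hx) (sq_nonneg _)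
  have e3 : ∫ x in Tsq, a z * ((grad f x).1 ^ 2 + (grad f x).2 ^ 2) ≤
      ∫ x in Tsq, 12 * (a x * ((grad f x).1 ^ 2 + (grad f x).2 ^ 2)) := by
    refine int_mono_Tsq (by fun_prop) (by fun_prop) fun x => ?_
    rw [← mul_assoc]
    exact mul_le_mul_of_nonneg_right (hh z x) (by positivity)
  rw [integral_const_mul] at e2 e3
  rw [integral_const_mul] at e3
  have e4 := mul_le_mul_of_nonneg_left (poinc2 hf hfp hf0) (h0 z)
  linarith

end fixed

lemma slice_energy {f a g : ℝ × ℝ → ℝ} {c : ℝ × ℝ → ℝ × ℝ} {ν : ℝ}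
    (hf : ContDiff ℝ 2 f) (hfp : SpacePeriodic f)
    (ha : ContDiff ℝ 1 a) (hap : SpacePeriodic a)
    (hc : ContDiff ℝ 1 c) (hν : 0 < ν)
    (heq : ∀ x, g x - div2 (fun y => (a y + ν) • grad f y) x = div2 c x) :
    (∫ x in Tsq, f x * g x) + ∫ x in Tsq, a x * ((grad f x).1 ^ 2 + (grad f x).2 ^ 2) ≤
      ∫ x in Tsq, f x * div2 c x := by
  have hf1 : ContDiff ℝ 1 f := hf.of_le (by norm_num)
  have hgr : ContDiff ℝ 1 (grad f) := by
    have h : ContDiff ℝ 1 (fderiv ℝ f) := hf.fderiv_right (by norm_num)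
    exact (h.clm_apply contDiff_const).prodMk (h.clm_apply contDiff_const)
  have hgp : SpacePeriodic (grad f) := by
    have key : ∀ v : ℝ × ℝ, (∀ x, f (x + v) = f x) → ∀ x, grad f (x + v) = grad f x := by
      intro v hv x
      have e : (fun y => f (y + v)) = f := funext hv
      have : fderiv ℝ f (x + v) = fderiv ℝ f x := by
        rw [← fderiv_comp_add_right, e]
      simp only [grad, this]
    exact fun x => ⟨key _ (fun y => (hfp y).1) x, key _ (fun y => (hfp y).2) x⟩
  have hF : ContDiff ℝ 1 (fun y => (a y + ν) • grad f y) := (ha.add contDiff_const).smul hgr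
  have hI := ibp hf1 hF hfp
    (fun x => ⟨by simp [(hap x).1, (hgp x).1], by simp [(hap x).2, (hgp x).2]⟩)
  have cf := hf1.continuous
  have ca := ha.continuous
  have cd := div2_cont hc
  have cD := div2_cont hF
  have c1 := grad1_cont hf1
  have c2 := grad2_cont hf1
  have e1 : ∫ x in Tsq, f x * g x = (∫ x in Tsq, f x * div2 (fun y => (a y + ν) • grad f y) x)
      + ∫ x in Tsq, f x * div2 c x := by
    rw [← integral_add (intOn_Tsq (by fun_prop)) (intOn_Tsq (by fun_prop))]
    refine integral_congr_ae (Eventually.of_forall fun x => ?_)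
    simp only
    rw [← heq x]; ring
  have e2 : ∫ x in Tsq, a x * ((grad f x).1 ^ 2 + (grad f x).2 ^ 2) ≤
      ∫ x in Tsq, ((grad f x).1 * ((a x + ν) • grad f x).1
        + (grad f x).2 * ((a x + ν) • grad f x).2) := by
    simp only [Prod.smul_fst, Prod.smul_snd, smul_eq_mul]
    refine int_mono_Tsq (by fun_prop) (by fun_prop) fun x => ?_
    nlinarith [mul_nonneg hν.le (sq_nonneg (grad f x).1), mul_nonneg hν.le (sq_nonneg (grad f x).2)]
  rw [e1, hI]
  linarith

/-- The time-derivative term vanishes after integration over a period. -/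
lemma time_zero {S : ℝ → (ℝ × ℝ) → ℝ} (hS : ContDiff ℝ 1 (fun p : ℝ × (ℝ × ℝ) => S p.1 p.2))
    (hp : ∀ θ x, S (θ + 1) x = S θ x) :
    Continuous (fun θ => ∫ x in Tsq, S θ x * deriv (fun σ => S σ x) θ) ∧
    ∫ θ in Set.Icc (0:ℝ) 1, ∫ x in Tsq, S θ x * deriv (fun σ => S σ x) θ = 0 := by
  have hd : ∀ θ x, HasDerivAt (fun σ => S σ x)
      (fderiv ℝ (fun p : ℝ × (ℝ × ℝ) => S p.1 p.2) (θ, x) (1, 0)) θ := fun θ x => by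
    have h := (hS.differentiable one_ne_zero (θ, x)).hasFDerivAt
    exact h.comp_hasDerivAt (f := fun σ : ℝ => (σ, x)) θ
      ((hasDerivAt_id θ).prodMk (hasDerivAt_const θ x))
  have cS := hS.continuous
  have cD : Continuous (fun p : ℝ × (ℝ × ℝ) => deriv (fun σ => S σ p.2) p.1) := by
    have : (fun p : ℝ × (ℝ × ℝ) => deriv (fun σ => S σ p.2) p.1) =
      fun p => fderiv ℝ (fun p : ℝ × (ℝ × ℝ) => S p.1 p.2) p (1, 0) :=
      funext fun p => (hd p.1 p.2).deriv
    rw [this]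
    exact (hS.continuous_fderiv one_ne_zero).clm_apply continuous_const
  have cU : Continuous (fun p : ℝ × (ℝ × ℝ) => S p.1 p.2 * deriv (fun σ => S σ p.2) p.1) :=
    cS.mul cD
  refine ⟨continuous_parametric_integral_of_continuous
    (f := fun θ x => S θ x * deriv (fun σ => S σ x) θ) cU Tsq_compact, ?_⟩
  rw [integral_integral_swap]
  · have : ∀ x, ∫ θ in Set.Icc (0:ℝ) 1, S θ x * deriv (fun σ => S σ x) θ = 0 := by
      intro x
      rw [integral_Icc_eq_integral_Ioc, ← intervalIntegral.integral_of_le zero_le_one]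
      rw [intervalIntegral.integral_eq_sub_of_hasDerivAt (f := fun θ => S θ x ^ 2 / 2)]
      · have := hp 0 x
        rw [zero_add] at this
        simp [this]
      · intro θ _
        have := ((hd θ x).fun_pow 2).div_const 2
        rw [(hd θ x).deriv]
        refine this.congr_deriv ?_
        norm_num
        ring
      · refine Continuous.intervalIntegrable ?_ _ _
        exact cU.comp (f := fun θ : ℝ => (θ, x)) (by fun_prop)
    simp_rw [this]
    simp
  · rw [Measure.prod_restrict, ← Measure.volume_eq_prod]
    exact cU.continuousOn.integrableOn_compact (isCompact_Icc.prod Tsq_compact)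

/-- Lemma 3.13: under (H1)–(H5), the `θ`-periodic solution `S^ν` of the
`ν`-regularized cell problem satisfies
`(∫_{θ_α}^{θ_ω} ∫_{𝕋²} |∇S^ν|² dx dθ)^{1/2} ≤ γ/G̃_thr`; in particular
`‖√(Ã_ε)|∇S^ν|‖_{L²_#(ℝ,L²(𝕋²))} ≤ γ`. -/
theorem nu_cell_solution_degenerate_gradient_estimate
    (γ Gthr θa θw : ℝ) (hγ : 0 ≤ γ)
    (A : ℝ → (ℝ × ℝ) → ℝ) (C : ℝ → (ℝ × ℝ) → ℝ × ℝ)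
    (hcoeff : CellCoeff A C)
    (h1 : CellH1 γ A C) (h3 : CellH3 Gthr θa θw A) (h4 : CellH4 Gthr A C)
    (h5 : CellH5 γ A C)
    (ν : ℝ) (hν : 0 < ν)
    (S : ℝ → (ℝ × ℝ) → ℝ) (hS : IsNuCellSol A C ν S) :
    (∫ θ in Set.Icc θa θw, ∫ x in Tsq, ‖grad (S θ) x‖ ^ 2) ^ (1/2 : ℝ) ≤ γ / Gthr ∧
    (∫ θ in Set.Icc (0:ℝ) 1, ∫ x in Tsq, A θ x * ‖grad (S θ) x‖ ^ 2) ^ (1/2 : ℝ) ≤ γ := by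
  obtain ⟨hA, hC, hA0, hAp, hCp, hAs, hCs⟩ := hcoeff
  obtain ⟨hSm, hSp, hSs, heq, hmean⟩ := hS
  obtain ⟨hG, haw, ha01, hw01, hGA⟩ := h3
  have hU1 : ContDiff ℝ 1 (fun p : ℝ × (ℝ × ℝ) => S p.1 p.2) := hSm.of_le (by norm_cast)
  have hU2 : ContDiff ℝ 2 (fun p : ℝ × (ℝ × ℝ) => S p.1 p.2) := hSm.of_le (by norm_cast)
  have hA1 : ContDiff ℝ 1 (fun p : ℝ × (ℝ × ℝ) => A p.1 p.2) := hA.of_le (by norm_cast)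
  have hC1 : ContDiff ℝ 1 (fun p : ℝ × (ℝ × ℝ) => C p.1 p.2) := hC.of_le (by norm_cast)
  have hS2 : ∀ θ, ContDiff ℝ 2 (S θ) := fun θ =>
    hU2.comp (f := fun x : ℝ × ℝ => (θ, x)) (contDiff_const.prodMk contDiff_id)
  have hS1 : ∀ θ, ContDiff ℝ 1 (S θ) := fun θ =>
    hU1.comp (f := fun x : ℝ × ℝ => (θ, x)) (contDiff_const.prodMk contDiff_id)
  have hAc : ∀ θ, ContDiff ℝ 1 (A θ) := fun θ =>
    hA1.comp (f := fun x : ℝ × ℝ => (θ, x)) (contDiff_const.prodMk contDiff_id)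
  have hCc : ∀ θ, ContDiff ℝ 1 (C θ) := fun θ =>
    hC1.comp (f := fun x : ℝ × ℝ => (θ, x)) (contDiff_const.prodMk contDiff_id)
  obtain ⟨cz, hz⟩ := time_zero hU1 hSp
  have cF : Continuous (fun p : ℝ × (ℝ × ℝ) => fderiv ℝ (S p.1) p.2) :=
    (ContDiff.fderiv (n := 0) (m := 1) (f := fun (p : ℝ × (ℝ × ℝ)) (y : ℝ × ℝ) => S p.1 y)
      (g := fun p => p.2)
      (hU1.comp (f := fun q : (ℝ × (ℝ × ℝ)) × (ℝ × ℝ) => (q.1.1, q.2)) (by fun_prop))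
      contDiff_snd (by norm_num)).continuous
  have cg : Continuous (fun p : ℝ × (ℝ × ℝ) => grad (S p.1) p.2) :=
    (cF.clm_apply continuous_const).prodMk (cF.clm_apply continuous_const)
  have cA := hA1.continuous
  set e : ℝ → ℝ := fun θ => ∫ x in Tsq, A θ x * ((grad (S θ) x).1 ^ 2 + (grad (S θ) x).2 ^ 2)
    with he
  have ce : Continuous e := continuous_parametric_integral_of_continuous
    (f := fun θ x => A θ x * ((grad (S θ) x).1 ^ 2 + (grad (S θ) x).2 ^ 2))
    (by unfold Function.uncurry; fun_prop) Tsq_compact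
  have e0 : ∀ θ, 0 ≤ e θ := fun θ =>
    integral_nonneg fun x => mul_nonneg (hA0 θ x) (by positivity)
  have main : ∀ K : ℝ, (∀ θ, ∫ x in Tsq, S θ x * div2 (C θ) x ≤ K / 2 + e θ / 2) →
      ∫ θ in Set.Icc (0:ℝ) 1, e θ ≤ K := by
    intro K hK
    have h : ∫ θ in Set.Icc (0:ℝ) 1, e θ ≤ ∫ θ in Set.Icc (0:ℝ) 1,
        (K - 2 * ∫ x in Tsq, S θ x * deriv (fun σ => S σ x) θ) := by
      refine integral_mono ce.integrableOn_Icc (Continuous.integrableOn_Icc (by fun_prop)) fun θ => ?_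
      have := slice_energy (hS2 θ) (hSs θ) (hAc θ) (hAs θ) (hCc θ) hν (heq θ)
      have := hK θ
      simp only [he] at *
      linarith
    rw [integral_sub (Continuous.integrableOn_Icc (by fun_prop))
      (Continuous.integrableOn_Icc (by fun_prop)), integral_const_mul, hz] at h
    simpa using h
  have hnorm : ∀ θ x, ‖grad (S θ) x‖ ^ 2 ≤ (grad (S θ) x).1 ^ 2 + (grad (S θ) x).2 ^ 2 := by
    intro θ x
    rw [Prod.norm_def]
    rcases max_cases ‖(grad (S θ) x).1‖ ‖(grad (S θ) x).2‖ with h | h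
    · rw [h.1, Real.norm_eq_abs, sq_abs]; nlinarith [sq_nonneg (grad (S θ) x).2]
    · rw [h.1, Real.norm_eq_abs, sq_abs]; nlinarith [sq_nonneg (grad (S θ) x).1]
  have fin : ∀ u v : ℝ, 0 ≤ v → u ≤ v ^ 2 → u ^ (1/2 : ℝ) ≤ v := by
    intro u v hv huv
    rw [← Real.sqrt_eq_rpow]
    exact Real.sqrt_le_iff.2 ⟨hv, huv⟩
  have cgx : ∀ θ, Continuous (grad (S θ)) := fun θ =>
    (grad_fst_cont (hS1 θ)).prodMk (grad_snd_cont (hS1 θ))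
  have cAx : ∀ θ, Continuous (A θ) := fun θ => (hAc θ).continuous
  constructor
  · refine fin _ _ (div_nonneg hγ hG.le) ?_
    have hE := main (γ ^ 2 / Gthr) fun θ => source_bound_G (hS1 θ) (hSs θ) (hmean θ) (hAc θ) (hCc θ)
      hG (hA0 θ) (h4 θ) (fun x => (h1 θ x).2.2.2.2.2)
    have hN : Continuous (fun θ => ∫ x in Tsq, ‖grad (S θ) x‖ ^ 2) :=
      continuous_parametric_integral_of_continuous (f := fun θ x => ‖grad (S θ) x‖ ^ 2)
        (by unfold Function.uncurry; fun_prop) Tsq_compact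
    have i1 : ∫ θ in Set.Icc θa θw, Gthr * ∫ x in Tsq, ‖grad (S θ) x‖ ^ 2 ≤
        ∫ θ in Set.Icc θa θw, e θ := by
      refine setIntegral_mono_on (Continuous.integrableOn_Icc (by fun_prop)) ce.integrableOn_Icc
        measurableSet_Icc fun θ hθ => ?_
      rw [← integral_const_mul]
      have := cgx θ
      have := cAx θ
      refine int_mono_Tsq (by fun_prop) (by fun_prop) fun x => ?_
      exact mul_le_mul (hGA x θ hθ) (hnorm θ x) (by positivity) (hA0 θ x)
    have i2 : ∫ θ in Set.Icc θa θw, e θ ≤ ∫ θ in Set.Icc (0:ℝ) 1, e θ :=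
      setIntegral_mono_set ce.integrableOn_Icc (Eventually.of_forall e0)
        (Set.Icc_subset_Icc ha01.1 hw01.2).eventuallyLE
    rw [integral_const_mul] at i1
    have : (γ / Gthr) ^ 2 = γ ^ 2 / Gthr / Gthr := by field_simp
    rw [this, le_div_iff₀ hG]
    linarith
  · refine fin _ _ hγ ?_
    have hE := main (γ ^ 2) fun θ => by
      rcases le_total γ 2 with h | h
      · exact source_bound_small (hS1 θ) (hSs θ) (hmean θ) (hAc θ) (hAs θ) (hA0 θ) (hCc θ) hγ h
          (fun x => (h1 θ x).2.2.2.2.2) (fun x => (h5 θ x).2.2.2) (fun x => (h5 θ x).2.2.1)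
      · exact source_bound_large (hS1 θ) (hSs θ) (hAc θ) (hCc θ) (hCs θ) h
          (fun x => (h5 θ x).2.1)
    refine le_trans ?_ hE
    have hN : Continuous (fun θ => ∫ x in Tsq, A θ x * ‖grad (S θ) x‖ ^ 2) :=
      continuous_parametric_integral_of_continuous (f := fun θ x => A θ x * ‖grad (S θ) x‖ ^ 2)
        (by unfold Function.uncurry; fun_prop) Tsq_compact
    refine integral_mono hN.integrableOn_Icc ce.integrableOn_Icc fun θ => ?_
    have := cgx θ
    have := cAx θ
    exact int_mono_Tsq (by fun_prop) (by fun_prop) fun x =>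
      mul_le_mul_of_nonneg_left (hnorm θ x) (hA0 θ x)
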